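/- Let σ > 0 and T > 0. Assume each X_i is divergence-free and δ-homogeneous of degree one. Let b : [0,T]×ℝ^d → ℝ^m be bounded and continuous with b(t,·) ∈ C¹(ℝ^d, ℝ^m) for each t. Let ρ : [0,T]×ℝ^d → ℝ be continuous and bounded, C¹ in t and C² in x on (0,T)×ℝ^d with these derivatives continuous, satisfying the Fokker–Planck equation ∂_t ρ = σ Δ_G ρ + div_G(b(t,·) ρ(t,·)) pointwise on (0,T)×ℝ^d, with ρ(0,·) = ρ₀ ∈ L²(ℝ^d) and with sup over t ∈ [0,T] of ∫_{ℝ^d} ρ(t,x)² dx finite. Then there is a constant K, depending only on σ, T and the supremum norm of b, such that for every t ∈ [0,T], ∫_{ℝ^d} ρ(t,x)² dx ≤ K ∫_{ℝ^d} ρ₀(x)² dx, and moreover ∫_0^T ∫_{ℝ^d} |∇_G ρ(t,x)|² dx dt ≤ K ∫_{ℝ^d} ρ₀(x)² dx. -/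

import Mathlib

open MeasureTheory Set

noncomputable section

/-- Derivative of `f : ℝ^d → ℝ` along the vector field `X` (horizontal derivative `X f`). -/
def vderiv {d : ℕ} (X : (Fin d → ℝ) → (Fin d → ℝ)) (f : (Fin d → ℝ) → ℝ)
    (x : Fin d → ℝ) : ℝ := fderiv ℝ f x (X x)

/-- Squared Euclidean norm of the horizontal gradient `∇_G f`. -/
def hgradSq {d m : ℕ} (X : Fin m → (Fin d → ℝ) → (Fin d → ℝ)) (f : (Fin d → ℝ) → ℝ)
    (x : Fin d → ℝ) : ℝ := ∑ i, (vderiv (X i) f x) ^ 2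

/-- Horizontal Laplacian `Δ_G f = Σ X_i (X_i f)`. -/
def hLap {d m : ℕ} (X : Fin m → (Fin d → ℝ) → (Fin d → ℝ)) (f : (Fin d → ℝ) → ℝ)
    (x : Fin d → ℝ) : ℝ := ∑ i, vderiv (X i) (vderiv (X i) f) x

/-- Horizontal divergence `div_G B = Σ X_i B_i`. -/
def hdiv {d m : ℕ} (X : Fin m → (Fin d → ℝ) → (Fin d → ℝ)) (B : (Fin d → ℝ) → Fin m → ℝ)
    (x : Fin d → ℝ) : ℝ := ∑ i, vderiv (X i) (fun y => B y i) x

/-- Euclidean divergence `Σ_j ∂_{x_j} X^j` of a vector field on `ℝ^d`. -/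
def ediv {d : ℕ} (X : (Fin d → ℝ) → (Fin d → ℝ)) (x : Fin d → ℝ) : ℝ :=
  ∑ j, fderiv ℝ X x (Pi.single j 1) j

/-- Anisotropic dilations `δ_λ x = (λ^{w_1} x_1, …, λ^{w_d} x_d)`. -/
def dil {d : ℕ} (w : Fin d → ℕ) (l : ℝ) (x : Fin d → ℝ) : Fin d → ℝ :=
  fun i => l ^ (w i) * x i

/-- A vector field is `δ`-homogeneous of degree one. -/
def homogOne {d : ℕ} (w : Fin d → ℕ) (X : (Fin d → ℝ) → (Fin d → ℝ)) : Prop :=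
  ∀ l : ℝ, 0 < l → ∀ x, fderiv ℝ (dil w l) x (X x) = l • X (dil w l x)

/-!
Multiply the equation by `2 φₙ² ρ`, where `φₙ = χ ∘ δ_{1/(n+1)}` is a bump function dilated to all
of `ℝ^d`, and integrate over space. Divergence-free fields are skew-adjoint, and Young's inequality
absorbs the cross terms into `Eₙ = ∫ φₙ² ρ²` and `Dₙ = ∫ φₙ² |∇_G ρ|²`, up to a multiple of
`∫ ρ² |∇_G φₙ|²`, which homogeneity makes `O(n⁻²)`. The outcome is
`Eₙ' + σ Dₙ ≤ A Eₙ + o(1)`, so Grönwall's inequality controls `Eₙ(t) + σ ∫₀ᵗ Dₙ`. Now let `n → ∞`,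
by dominated convergence in `Eₙ` and by Fatou's lemma in `Dₙ`.
-/

section VectorFields

variable {d m : ℕ} {Y : (Fin d → ℝ) → (Fin d → ℝ)} {X : Fin m → (Fin d → ℝ) → (Fin d → ℝ)}
  {f g : (Fin d → ℝ) → ℝ} {x : Fin d → ℝ}

theorem contDiff_vderiv {n : WithTop ℕ∞} (hY : ContDiff ℝ n Y) (hf : ContDiff ℝ (n + 1) f) :
    ContDiff ℝ n (vderiv Y f) :=
  (hf.fderiv_right le_rfl).clm_apply hY

theorem continuous_vderiv (hY : Continuous Y) (hf : ContDiff ℝ 1 f) : Continuous (vderiv Y f) :=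
  (hf.continuous_fderiv one_ne_zero).clm_apply hY

theorem hasCompactSupport_vderiv (hf : HasCompactSupport f) : HasCompactSupport (vderiv Y f) :=
  (hf.fderiv (𝕜 := ℝ)).mono fun x hx h => hx (by simp [vderiv, h])

theorem vderiv_add (hf : DifferentiableAt ℝ f x) (hg : DifferentiableAt ℝ g x) :
    vderiv Y (fun y => f y + g y) x = vderiv Y f x + vderiv Y g x := by
  simp [vderiv, fderiv_fun_add hf hg]

theorem vderiv_const_mul (c : ℝ) (hf : DifferentiableAt ℝ f x) :
    vderiv Y (fun y => c * f y) x = c * vderiv Y f x := by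
  simp [vderiv, fderiv_const_mul hf]

theorem vderiv_mul (hf : DifferentiableAt ℝ f x) (hg : DifferentiableAt ℝ g x) :
    vderiv Y (fun y => f y * g y) x = f x * vderiv Y g x + vderiv Y f x * g x := by
  simp [vderiv, fderiv_fun_mul hf hg, mul_comm]

theorem vderiv_sq_mul (hf : DifferentiableAt ℝ f x) (hg : DifferentiableAt ℝ g x) :
    vderiv Y (fun y => f y ^ 2 * g y) x =
      2 * f x * g x * vderiv Y f x + f x ^ 2 * vderiv Y g x := by
  simp only [pow_two]
  rw [vderiv_mul (hf.fun_mul hf) hg, vderiv_mul hf hf]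
  ring

theorem vderiv_eq_sum (Y : (Fin d → ℝ) → (Fin d → ℝ)) (f : (Fin d → ℝ) → ℝ) (x : Fin d → ℝ) :
    vderiv Y f x = ∑ j, Y x j * fderiv ℝ f x (Pi.single j 1) := by
  conv_lhs => rw [vderiv, pi_eq_sum_univ' (Y x)]
  simp

theorem hgradSq_nonneg (X : Fin m → (Fin d → ℝ) → (Fin d → ℝ)) (f : (Fin d → ℝ) → ℝ)
    (x : Fin d → ℝ) : 0 ≤ hgradSq X f x :=
  Finset.sum_nonneg fun _ _ => sq_nonneg _

theorem continuous_hgradSq (hX : ∀ i, Continuous (X i)) (hf : ContDiff ℝ 1 f) :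
    Continuous (hgradSq X f) :=
  continuous_finsetSum _ fun i _ => (continuous_vderiv (hX i) hf).pow 2

theorem hasCompactSupport_hgradSq (hf : HasCompactSupport f) :
    HasCompactSupport (hgradSq X f) :=
  (hf.fderiv (𝕜 := ℝ)).mono fun x hx h => hx (by simp [hgradSq, vderiv, h])

end VectorFields

section IntegrationByParts

variable {d m : ℕ} {Y : (Fin d → ℝ) → (Fin d → ℝ)} {X : Fin m → (Fin d → ℝ) → (Fin d → ℝ)}
  {f g : (Fin d → ℝ) → ℝ}

theorem integral_vderiv (hY : ContDiff ℝ 1 Y) (hf : ContDiff ℝ 1 f) (hfc : HasCompactSupport f) :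
    ∫ x, vderiv Y f x = -∫ x, ediv Y x * f x := by
  have hYj (j : Fin d) : ContDiff ℝ 1 fun x => Y x j := contDiff_pi.1 hY j
  have fderiv_coord (j : Fin d) (x : Fin d → ℝ) :
      fderiv ℝ (fun x => Y x j) x (Pi.single j 1) = fderiv ℝ Y x (Pi.single j 1) j := by
    rw [fderiv_apply (hY.differentiable one_ne_zero x)]
    rfl
  have hint_div (j : Fin d) :
      Integrable fun x => fderiv ℝ (fun x => Y x j) x (Pi.single j 1) * f x :=
    ((((hYj j).continuous_fderiv one_ne_zero).clm_apply continuous_const).mul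
      hf.continuous).integrable_of_hasCompactSupport hfc.mul_left
  have hint_grad (j : Fin d) : Integrable fun x => Y x j * fderiv ℝ f x (Pi.single j 1) :=
    ((hYj j).continuous.mul ((hf.continuous_fderiv one_ne_zero).clm_apply
      continuous_const)).integrable_of_hasCompactSupport (hfc.fderiv_apply ℝ _).mul_left
  have hint_mul (j : Fin d) : Integrable fun x => Y x j * f x :=
    ((hYj j).continuous.mul hf.continuous).integrable_of_hasCompactSupport hfc.mul_left
  calc ∫ x, vderiv Y f x
      = ∑ j, ∫ x, Y x j * fderiv ℝ f x (Pi.single j 1) := by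
        simp only [vderiv_eq_sum]
        exact integral_finsetSum _ fun j _ => hint_grad j
    _ = ∑ j, -∫ x, fderiv ℝ (fun x => Y x j) x (Pi.single j 1) * f x :=
        Finset.sum_congr rfl fun j _ => integral_mul_fderiv_eq_neg_fderiv_mul_of_integrable
          (hint_div j) (hint_grad j) (hint_mul j)
          (fun x _ => (hYj j).differentiable one_ne_zero x)
          (fun x _ => hf.differentiable one_ne_zero x)
    _ = -∫ x, ediv Y x * f x := by
        rw [Finset.sum_neg_distrib, ← integral_finsetSum _ fun j _ => hint_div j]
        simp only [fderiv_coord, ← Finset.sum_mul, ediv]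

theorem integral_mul_vderiv (hY : ContDiff ℝ 1 Y) (hYdiv : ∀ x, ediv Y x = 0)
    (hf : ContDiff ℝ 1 f) (hfc : HasCompactSupport f) (hg : ContDiff ℝ 1 g) :
    ∫ x, f x * vderiv Y g x = -∫ x, vderiv Y f x * g x := by
  have hzero : ∫ x, vderiv Y (fun y => f y * g y) x = 0 := by
    simp [integral_vderiv hY (hf.mul hg) hfc.mul_right, hYdiv]
  have hprod (x : Fin d → ℝ) : vderiv Y (fun y => f y * g y) x
      = f x * vderiv Y g x + vderiv Y f x * g x :=
    vderiv_mul (hf.differentiable one_ne_zero x) (hg.differentiable one_ne_zero x)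
  have hint_right : Integrable fun x => f x * vderiv Y g x :=
    (hf.continuous.mul (continuous_vderiv hY.continuous hg)).integrable_of_hasCompactSupport
      hfc.mul_right
  have hint_left : Integrable fun x => vderiv Y f x * g x :=
    ((continuous_vderiv hY.continuous hf).mul hg.continuous).integrable_of_hasCompactSupport
      (hasCompactSupport_vderiv hfc).mul_right
  simp only [hprod] at hzero
  rw [integral_add hint_right hint_left] at hzero
  linarith

theorem integral_mul_hdiv (hX : ∀ i, ContDiff ℝ 1 (X i)) (hXdiv : ∀ i x, ediv (X i) x = 0)
    (hf : ContDiff ℝ 1 f) (hfc : HasCompactSupport f) {F : (Fin d → ℝ) → Fin m → ℝ}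
    (hF : ∀ i, ContDiff ℝ 1 fun y => F y i) :
    ∫ x, f x * hdiv X F x = -∫ x, ∑ i, vderiv (X i) f x * F x i := by
  have hint_right (i : Fin m) : Integrable fun x => f x * vderiv (X i) (fun y => F y i) x :=
    (hf.continuous.mul (continuous_vderiv (hX i).continuous
      (hF i))).integrable_of_hasCompactSupport hfc.mul_right
  have hint_left (i : Fin m) : Integrable fun x => vderiv (X i) f x * F x i :=
    ((continuous_vderiv (hX i).continuous hf).mul
      (hF i).continuous).integrable_of_hasCompactSupport (hasCompactSupport_vderiv hfc).mul_right
  simp only [hdiv, Finset.mul_sum]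
  rw [integral_finsetSum _ fun i _ => hint_right i, integral_finsetSum _ fun i _ => hint_left i,
    ← Finset.sum_neg_distrib]
  exact Finset.sum_congr rfl fun i _ => integral_mul_vderiv (hX i) (hXdiv i) hf hfc (hF i)

end IntegrationByParts

section HorizontalCutoffs

open Filter Topology

variable {d m : ℕ} {X : Fin m → (Fin d → ℝ) → (Fin d → ℝ)} {w : Fin d → ℕ}

/-- A sequence of `C¹` compactly supported cutoffs `φ n` exhausting `ℝ^d`, whose horizontal
gradients tend to zero uniformly at the rate `|∇_G (φ n)|² ≤ c n`. It allows integrations by parts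
over all of `ℝ^d`, so its existence is a completeness property of the vector fields. -/
structure IsHorizontalCutoff (X : Fin m → (Fin d → ℝ) → (Fin d → ℝ))
    (φ : ℕ → (Fin d → ℝ) → ℝ) (c : ℕ → ℝ) : Prop where
  contDiff : ∀ n, ContDiff ℝ 1 (φ n)
  hasCompactSupport : ∀ n, HasCompactSupport (φ n)
  nonneg : ∀ n x, 0 ≤ φ n x
  le_one : ∀ n x, φ n x ≤ 1
  tendsto_one : ∀ x, Tendsto (fun n => φ n x) atTop (𝓝 1)
  hgradSq_le : ∀ n x, hgradSq X (φ n) x ≤ c n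
  tendsto_zero : Tendsto c atTop (𝓝 0)

theorem contDiff_dil {n : WithTop ℕ∞} (w : Fin d → ℕ) (l : ℝ) : ContDiff ℝ n (dil w l) := by
  unfold dil
  fun_prop

theorem hasCompactSupport_comp_dil {f : (Fin d → ℝ) → ℝ} (hf : HasCompactSupport f) {l : ℝ}
    (hl : l ≠ 0) : HasCompactSupport (f ∘ dil w l) :=
  hf.comp_homeomorph (.piCongrRight fun i => .mulLeft₀ (l ^ w i) (pow_ne_zero _ hl))

theorem tendsto_dil_zero (hw : ∀ i, 0 < w i) (x : Fin d → ℝ) :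
    Tendsto (fun l => dil w l x) (𝓝 0) (𝓝 0) := by
  have hcont : Continuous fun l => dil w l x := by
    unfold dil
    fun_prop
  have hzero : dil w 0 x = 0 := funext fun i => by simp [dil, (hw i).ne']
  simpa only [hzero] using hcont.tendsto 0

theorem vderiv_comp_dil {Y : (Fin d → ℝ) → (Fin d → ℝ)} (hY : homogOne w Y) {l : ℝ} (hl : 0 < l)
    {f : (Fin d → ℝ) → ℝ} {x : Fin d → ℝ} (hf : DifferentiableAt ℝ f (dil w l x)) :
    vderiv Y (f ∘ dil w l) x = l * vderiv Y f (dil w l x) := by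
  have hdil : DifferentiableAt ℝ (dil w l) x := (contDiff_dil w l).differentiable one_ne_zero x
  rw [vderiv, fderiv_comp x hf hdil, ContinuousLinearMap.comp_apply, hY l hl x, map_smul,
    smul_eq_mul, vderiv]

theorem hgradSq_comp_dil (hX : ∀ i, homogOne w (X i)) {l : ℝ} (hl : 0 < l)
    {f : (Fin d → ℝ) → ℝ} {x : Fin d → ℝ} (hf : DifferentiableAt ℝ f (dil w l x)) :
    hgradSq X (f ∘ dil w l) x = l ^ 2 * hgradSq X f (dil w l x) := by
  simp only [hgradSq, Finset.mul_sum, vderiv_comp_dil (hX _) hl hf, mul_pow]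

theorem exists_isHorizontalCutoff_of_homogOne (hw : ∀ i, 0 < w i) (hX : ∀ i, Continuous (X i))
    (hXhom : ∀ i, homogOne w (X i)) : ∃ φ c, IsHorizontalCutoff X φ c := by
  let χ : ContDiffBump (0 : Fin d → ℝ) := ⟨1, 2, one_pos, one_lt_two⟩
  have hχ : ContDiff ℝ 1 χ := χ.contDiff
  obtain ⟨C, hC⟩ := (continuous_hgradSq hX hχ).bounded_above_of_compact_support
    (hasCompactSupport_hgradSq χ.hasCompactSupport)
  let l : ℕ → ℝ := fun n => 1 / ((n : ℝ) + 1)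
  have hl (n : ℕ) : 0 < l n := Nat.one_div_pos_of_nat
  have hl_lim : Tendsto l atTop (𝓝 0) := tendsto_one_div_add_atTop_nhds_zero_nat
  refine ⟨fun n => χ ∘ dil w (l n), fun n => l n ^ 2 * C, ?_⟩
  constructor
  case contDiff => exact fun n => hχ.comp (contDiff_dil w _)
  case hasCompactSupport =>
    exact fun n => hasCompactSupport_comp_dil χ.hasCompactSupport (hl n).ne'
  case nonneg => exact fun n x => χ.nonneg
  case le_one => exact fun n x => χ.le_one
  case tendsto_one =>
    intro x
    have hχ_zero : χ 0 = 1 := χ.one_of_mem_closedBall (by simp [χ])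
    simpa only [hχ_zero, Function.comp_def] using
      (χ.continuous.tendsto 0).comp ((tendsto_dil_zero hw x).comp hl_lim)
  case hgradSq_le =>
    intro n x
    rw [hgradSq_comp_dil hXhom (hl n) (hχ.differentiable one_ne_zero _)]
    exact mul_le_mul_of_nonneg_left ((le_abs_self _).trans (hC _)) (sq_nonneg _)
  case tendsto_zero => simpa using (hl_lim.pow 2).mul_const C

end HorizontalCutoffs

section SpatialEstimate

variable {d m : ℕ} {X : Fin m → (Fin d → ℝ) → (Fin d → ℝ)} {σ : ℝ}
  {β : (Fin d → ℝ) → Fin m → ℝ} {φ r : (Fin d → ℝ) → ℝ}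

/-- The flux `σ ∇_G r + β r`, whose horizontal divergence is the right-hand side of the
Fokker–Planck equation. -/
def fokkerPlanckFlux (X : Fin m → (Fin d → ℝ) → (Fin d → ℝ)) (σ : ℝ)
    (β : (Fin d → ℝ) → Fin m → ℝ) (r : (Fin d → ℝ) → ℝ) (x : Fin d → ℝ) (i : Fin m) : ℝ :=
  σ * vderiv (X i) r x + β x i * r x

/-- The localized energy `∫ φ² u²`. -/
def cutoffEnergy (φ u : (Fin d → ℝ) → ℝ) : ℝ := ∫ x, φ x ^ 2 * u x ^ 2

/-- The localized dissipation `∫ φ² |∇_G u|²`. -/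
def cutoffDissipation (X : Fin m → (Fin d → ℝ) → (Fin d → ℝ)) (φ u : (Fin d → ℝ) → ℝ) : ℝ :=
  ∫ x, φ x ^ 2 * hgradSq X u x

/-- The exponential rate `(2/σ + 2) M²` at which the energy may grow under a drift of size `M`. -/
def energyGrowthRate (σ M : ℝ) : ℝ := (2 / σ + 2) * M ^ 2

theorem energyGrowthRate_nonneg (hσ : 0 < σ) (M : ℝ) : 0 ≤ energyGrowthRate σ M := by
  unfold energyGrowthRate
  positivity

theorem cutoffEnergy_nonneg (φ u : (Fin d → ℝ) → ℝ) : 0 ≤ cutoffEnergy φ u :=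
  integral_nonneg fun x => by positivity

theorem cutoffDissipation_nonneg (X : Fin m → (Fin d → ℝ) → (Fin d → ℝ))
    (φ u : (Fin d → ℝ) → ℝ) : 0 ≤ cutoffDissipation X φ u :=
  integral_nonneg fun x => mul_nonneg (sq_nonneg _) (hgradSq_nonneg X u x)

theorem hasCompactSupport_sq_mul (hφc : HasCompactSupport φ) (f : (Fin d → ℝ) → ℝ) :
    HasCompactSupport fun x => φ x ^ 2 * f x :=
  hφc.mono fun x hx h => hx (by simp [h])

theorem integrable_sq_mul (hφ : Continuous φ) (hφc : HasCompactSupport φ)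
    {f : (Fin d → ℝ) → ℝ} (hf : Continuous f) : Integrable fun x => φ x ^ 2 * f x :=
  ((hφ.pow 2).mul hf).integrable_of_hasCompactSupport (hasCompactSupport_sq_mul hφc f)

theorem contDiff_fokkerPlanckFlux (hX : ∀ i, ContDiff ℝ 1 (X i)) (hr : ContDiff ℝ 2 r)
    (hβ : ∀ i, ContDiff ℝ 1 fun y => β y i) (i : Fin m) :
    ContDiff ℝ 1 fun y => fokkerPlanckFlux X σ β r y i :=
  (contDiff_const.mul (contDiff_vderiv (hX i) hr)).add ((hβ i).mul (hr.of_le one_le_two))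

theorem hdiv_fokkerPlanckFlux (hX : ∀ i, ContDiff ℝ 1 (X i)) (hr : ContDiff ℝ 2 r)
    (hβ : ∀ i, ContDiff ℝ 1 fun y => β y i) (x : Fin d → ℝ) :
    hdiv X (fokkerPlanckFlux X σ β r) x =
      σ * hLap X r x + hdiv X (fun y i => β y i * r y) x := by
  have hXr (i : Fin m) : DifferentiableAt ℝ (vderiv (X i) r) x :=
    (contDiff_vderiv (n := 1) (hX i) hr).differentiable one_ne_zero x
  have hβr (i : Fin m) : DifferentiableAt ℝ (fun y => β y i * r y) x :=
    ((hβ i).mul (hr.of_le one_le_two)).differentiable one_ne_zero x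
  simp only [hdiv, hLap, fokkerPlanckFlux, Finset.mul_sum, ← Finset.sum_add_distrib,
    vderiv_add ((hXr _).const_mul σ) (hβr _), vderiv_const_mul σ (hXr _)]

theorem sum_sq_le_of_abs_le {ι : Type*} [Fintype ι] {v : ι → ℝ} {M : ℝ} (hv : ∀ i, |v i| ≤ M) :
    ∑ i, v i ^ 2 ≤ (√(Fintype.card ι) * M) ^ 2 := by
  rw [mul_pow, Real.sq_sqrt (Nat.cast_nonneg _), ← nsmul_eq_mul]
  exact Finset.sum_le_card_nsmul _ _ _ fun i _ =>
    sq_le_sq.2 ((hv i).trans (le_abs_self M))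

theorem young_flux (hσ : 0 < σ) (p q r β φ : ℝ) :
    -2 * ((2 * φ * r * p + φ ^ 2 * q) * (σ * q + β * r)) ≤
      -σ * (φ ^ 2 * q ^ 2) + (2 / σ + 2) * (φ ^ 2 * r ^ 2) * β ^ 2
        + (8 * σ + 2) * r ^ 2 * p ^ 2 := by
  -- One square for each of the cross terms `φ r p q`, `φ² q β r` and `φ r² p β`.
  have hsquares : 0 ≤ (σ / 2) * (φ * q + 4 * r * p) ^ 2
      + (σ / 2) * (φ * q + 2 / σ * φ * r * β) ^ 2 + 2 * (φ * r * β + r * p) ^ 2 := by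
    positivity
  refine sub_nonneg.1 (hsquares.trans_eq ?_)
  field_simp
  ring

theorem neg_two_mul_sum_vderiv_mul_flux_le (hσ : 0 < σ) {x : Fin d → ℝ}
    (hφ : DifferentiableAt ℝ φ x) (hr : DifferentiableAt ℝ r x) {M c : ℝ}
    (hβM : ∑ i, β x i ^ 2 ≤ M ^ 2) (hφ_grad : hgradSq X φ x ≤ c) :
    -2 * ∑ i, vderiv (X i) (fun y => φ y ^ 2 * r y) x * fokkerPlanckFlux X σ β r x i ≤
      -σ * (φ x ^ 2 * hgradSq X r x) + energyGrowthRate σ M * (φ x ^ 2 * r x ^ 2)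
        + (8 * σ + 2) * c * r x ^ 2 := by
  calc -2 * ∑ i, vderiv (X i) (fun y => φ y ^ 2 * r y) x * fokkerPlanckFlux X σ β r x i
      ≤ -σ * (φ x ^ 2 * hgradSq X r x) + (2 / σ + 2) * (φ x ^ 2 * r x ^ 2) * ∑ i, β x i ^ 2
        + (8 * σ + 2) * r x ^ 2 * hgradSq X φ x := by
        simp only [hgradSq, Finset.mul_sum, ← Finset.sum_add_distrib, vderiv_sq_mul hφ hr]
        exact Finset.sum_le_sum fun i _ => young_flux hσ _ _ _ _ _
    _ ≤ _ := by
        rw [energyGrowthRate, mul_right_comm _ (M ^ 2), mul_right_comm _ c]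
        gcongr

theorem two_mul_integral_mul_hdiv_flux_le (hX : ∀ i, ContDiff ℝ 1 (X i))
    (hXdiv : ∀ i x, ediv (X i) x = 0) (hσ : 0 < σ) (hr : ContDiff ℝ 2 r)
    (hr_int : Integrable fun x => r x ^ 2) (hβ : ∀ i, ContDiff ℝ 1 fun y => β y i) {M : ℝ}
    (hβM : ∀ x, ∑ i, β x i ^ 2 ≤ M ^ 2) (hφ : ContDiff ℝ 1 φ) (hφc : HasCompactSupport φ)
    {c : ℝ} (hφ_grad : ∀ x, hgradSq X φ x ≤ c) :
    2 * ∫ x, φ x ^ 2 * r x * hdiv X (fokkerPlanckFlux X σ β r) x ≤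
      -σ * cutoffDissipation X φ r + energyGrowthRate σ M * cutoffEnergy φ r
        + (8 * σ + 2) * c * ∫ x, r x ^ 2 := by
  have hr1 : ContDiff ℝ 1 r := hr.of_le one_le_two
  have hψ : ContDiff ℝ 1 fun x => φ x ^ 2 * r x := (hφ.pow 2).mul hr1
  have hF := contDiff_fokkerPlanckFlux (σ := σ) hX hr hβ
  have hint_flux : Integrable fun x =>
      ∑ i, vderiv (X i) (fun y => φ y ^ 2 * r y) x * fokkerPlanckFlux X σ β r x i :=
    integrable_finsetSum _ fun i _ =>
      ((continuous_vderiv (hX i).continuous hψ).mul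
        (hF i).continuous).integrable_of_hasCompactSupport
          (hasCompactSupport_vderiv (hasCompactSupport_sq_mul hφc r)).mul_right
  have hint_diss : Integrable fun x => -σ * (φ x ^ 2 * hgradSq X r x) :=
    (integrable_sq_mul hφ.continuous hφc
      (continuous_hgradSq (fun i => (hX i).continuous) hr1)).const_mul _
  have hint_energy : Integrable fun x => energyGrowthRate σ M * (φ x ^ 2 * r x ^ 2) :=
    (integrable_sq_mul hφ.continuous hφc (hr.continuous.pow 2)).const_mul _
  have hint_main : Integrable fun x =>
      -σ * (φ x ^ 2 * hgradSq X r x) + energyGrowthRate σ M * (φ x ^ 2 * r x ^ 2) :=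
    hint_diss.add hint_energy
  calc 2 * ∫ x, φ x ^ 2 * r x * hdiv X (fokkerPlanckFlux X σ β r) x
      = ∫ x, -2 * ∑ i, vderiv (X i) (fun y => φ y ^ 2 * r y) x
          * fokkerPlanckFlux X σ β r x i := by
        rw [integral_mul_hdiv hX hXdiv hψ (hasCompactSupport_sq_mul hφc r) hF, integral_const_mul]
        ring
    _ ≤ ∫ x, (-σ * (φ x ^ 2 * hgradSq X r x) + energyGrowthRate σ M * (φ x ^ 2 * r x ^ 2)
          + (8 * σ + 2) * c * r x ^ 2) :=
        integral_mono (hint_flux.const_mul _)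
          (hint_main.add (hr_int.const_mul _)) fun x =>
            neg_two_mul_sum_vderiv_mul_flux_le hσ (hφ.differentiable one_ne_zero x)
              (hr1.differentiable one_ne_zero x) (hβM x) (hφ_grad x)
    _ = _ := by
        rw [integral_add hint_main (hr_int.const_mul _),
          integral_add hint_diss hint_energy, integral_const_mul, integral_const_mul,
          integral_const_mul, cutoffDissipation, cutoffEnergy]

end SpatialEstimate

section TimeEvolution

open Filter Topology

theorem hasDerivAt_integral_mul_of_hasCompactSupport {α : Type*} [TopologicalSpace α]
    [MeasurableSpace α] [OpensMeasurableSpace α] {μ : Measure α} [IsFiniteMeasureOnCompacts μ]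
    {φ : α → ℝ} (hφ : Continuous φ) (hφc : HasCompactSupport φ) {U : Set ℝ} (hU : IsOpen U)
    {u u' : ℝ → α → ℝ} (hu : ∀ s ∈ U, Continuous (u s))
    (hu' : ContinuousOn (fun p : ℝ × α => u' p.1 p.2) (U ×ˢ univ))
    (hderiv : ∀ s ∈ U, ∀ x, HasDerivAt (fun s => u s x) (u' s x) s) {t : ℝ} (ht : t ∈ U) :
    HasDerivAt (fun s => ∫ x, φ x * u s x ∂μ) (∫ x, φ x * u' t x ∂μ) t := by
  obtain ⟨V, hV, hVU, hVc⟩ := local_compact_nhds (hU.mem_nhds ht)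
  obtain ⟨M, hM⟩ := (hVc.prod hφc.isCompact).exists_bound_of_continuousOn
    (hu'.mono (prod_mono hVU (subset_univ _)))
  have hu't : Continuous (u' t) :=
    hu'.comp_continuous (f := fun x => (t, x)) (by fun_prop) fun x => ⟨ht, mem_univ x⟩
  have hbound (x : α) (s : ℝ) (hs : s ∈ V) : ‖φ x * u' s x‖ ≤ ‖φ x‖ * M := by
    rw [norm_mul]
    by_cases hx : x ∈ tsupport φ
    · exact mul_le_mul_of_nonneg_left (hM (s, x) ⟨hs, hx⟩) (norm_nonneg _)
    · simp [image_eq_zero_of_notMem_tsupport hx]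
  exact (hasDerivAt_integral_of_dominated_loc_of_deriv_le (F := fun s x => φ x * u s x) hV
    (eventually_of_mem hV fun s hs => (hφ.mul (hu s (hVU hs))).aestronglyMeasurable)
    ((hφ.mul (hu t ht)).integrable_of_hasCompactSupport hφc.mul_right)
    (hφ.mul hu't).aestronglyMeasurable (.of_forall hbound)
    ((hφ.norm.integrable_of_hasCompactSupport hφc.norm).mul_const M)
    (.of_forall fun x s hs => (hderiv s (hVU hs) x).const_mul (φ x))).2

theorem integrableOn_and_integral_le_sub_of_le_deriv {a b : ℝ} {G G' D : ℝ → ℝ} (hab : a ≤ b)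
    (hG : ContinuousOn G (Icc a b)) (hG' : ∀ t ∈ Ioo a b, HasDerivAt G (G' t) t)
    (hD : ContinuousOn D (Ioo a b)) (hD_nonneg : ∀ t ∈ Ioo a b, 0 ≤ D t)
    (hle : ∀ t ∈ Ioo a b, D t ≤ G' t) :
    IntegrableOn D (Ioo a b) ∧ ∫ t in Ioo a b, D t ≤ G b - G a := by
  have hG'_int : IntegrableOn G' (Ioc a b) :=
    intervalIntegral.integrableOn_deriv_of_nonneg hG hG' fun t ht =>
      (hD_nonneg t ht).trans (hle t ht)
  have hD_int : IntegrableOn D (Ioo a b) := by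
    refine (hG'_int.mono_set Ioo_subset_Ioc_self).mono'
      (hD.aestronglyMeasurable measurableSet_Ioo) ?_
    filter_upwards [ae_restrict_mem measurableSet_Ioo] with t ht
    rw [Real.norm_of_nonneg (hD_nonneg t ht)]
    exact hle t ht
  refine ⟨hD_int, ?_⟩
  rw [← intervalIntegral.integral_eq_sub_of_hasDerivAt_of_le hab hG hG'
    ((intervalIntegrable_iff_integrableOn_Ioc_of_le hab).2 hG'_int),
    intervalIntegral.integral_of_le hab, integral_Ioc_eq_integral_Ioo]
  exact setIntegral_mono_on hD_int (hG'_int.mono_set Ioo_subset_Ioc_self) measurableSet_Ioo hle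

theorem integrableOn_and_add_integral_le_of_deriv_add_le {a b A c : ℝ} {E E' D : ℝ → ℝ}
    (hab : a ≤ b) (hA : 0 ≤ A) (hc : 0 ≤ c) (hE : ContinuousOn E (Icc a b))
    (hE' : ∀ t ∈ Ioo a b, HasDerivAt E (E' t) t) (hD : ContinuousOn D (Ioo a b))
    (hD_nonneg : ∀ t ∈ Ioo a b, 0 ≤ D t) (hle : ∀ t ∈ Ioo a b, E' t + D t ≤ A * E t + c) :
    IntegrableOn D (Ioo a b) ∧
      E b + ∫ t in Ioo a b, D t ≤ Real.exp (A * (b - a)) * (E a + c * (b - a)) := by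
  -- The integrating factor `exp (A (b - t))` is at least one, so it costs nothing in front of `D`.
  let G : ℝ → ℝ := fun t => Real.exp (A * (b - a)) * c * t - Real.exp (A * (b - t)) * E t
  let G' : ℝ → ℝ := fun t => Real.exp (A * (b - a)) * c + Real.exp (A * (b - t)) * (A * E t - E' t)
  have hG : ContinuousOn G (Icc a b) := by
    fun_prop
  have hG' (t : ℝ) (ht : t ∈ Ioo a b) : HasDerivAt G (G' t) t := by
    have hexp :
        HasDerivAt (fun t => Real.exp (A * (b - t))) (Real.exp (A * (b - t)) * (A * -1)) t :=
      (((hasDerivAt_id t).const_sub b).const_mul A).exp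
    refine (((hasDerivAt_id t).const_mul _).sub (hexp.mul (hE' t ht))).congr_deriv ?_
    simp only [G']
    ring
  have hDG' (t : ℝ) (ht : t ∈ Ioo a b) : D t ≤ G' t := by
    have hat : a ≤ t := ht.1.le
    calc D t ≤ Real.exp (A * (b - t)) * D t :=
          le_mul_of_one_le_left (hD_nonneg t ht)
            (Real.one_le_exp (mul_nonneg hA (sub_nonneg.2 ht.2.le)))
      _ ≤ Real.exp (A * (b - t)) * (c + (A * E t - E' t)) := by
          gcongr
          linarith [hle t ht]
      _ ≤ G' t := by
          rw [mul_add]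
          exact add_le_add_left (by gcongr) _
  obtain ⟨hD_int, hD_le⟩ :=
    integrableOn_and_integral_le_sub_of_le_deriv hab hG hG' hD hD_nonneg hDG'
  refine ⟨hD_int, ?_⟩
  simp only [G, sub_self, mul_zero, Real.exp_zero, one_mul] at hD_le
  linarith

end TimeEvolution

section FokkerPlanck

open Filter Topology

variable {d m : ℕ} {X : Fin m → (Fin d → ℝ) → (Fin d → ℝ)} {σ T : ℝ}
  {b : ℝ → (Fin d → ℝ) → Fin m → ℝ} {ρ : ℝ → (Fin d → ℝ) → ℝ}

/-- `ρ` is a classical solution of `∂_t ρ = σ Δ_G ρ + div_G (b ρ)` on `(0, T) × ℝ^d`, continuous up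
to the endpoints in time, for a drift `b` that is `C¹` in space. Of the derivatives of `ρ`, only
`∂_t ρ` and `∇_G ρ` are asked to be jointly continuous. -/
structure IsFokkerPlanckSolution (X : Fin m → (Fin d → ℝ) → (Fin d → ℝ)) (σ T : ℝ)
    (b : ℝ → (Fin d → ℝ) → Fin m → ℝ) (ρ : ℝ → (Fin d → ℝ) → ℝ) : Prop where
  contDiff_drift : ∀ t ∈ Ioo 0 T, ∀ i, ContDiff ℝ 1 fun y => b t y i
  continuousOn : ContinuousOn (fun p : ℝ × (Fin d → ℝ) => ρ p.1 p.2) (Icc 0 T ×ˢ univ)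
  differentiableAt : ∀ x, ∀ t ∈ Ioo 0 T, DifferentiableAt ℝ (fun s => ρ s x) t
  contDiff : ∀ t ∈ Ioo 0 T, ContDiff ℝ 2 (ρ t)
  continuousOn_deriv : ContinuousOn
    (fun p : ℝ × (Fin d → ℝ) => deriv (fun s => ρ s p.2) p.1) (Ioo 0 T ×ˢ univ)
  continuousOn_vderiv : ∀ i, ContinuousOn
    (fun p : ℝ × (Fin d → ℝ) => vderiv (X i) (ρ p.1) p.2) (Ioo 0 T ×ˢ univ)
  deriv_eq : ∀ t ∈ Ioo 0 T, ∀ x, deriv (fun s => ρ s x) t =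
    σ * hLap X (ρ t) x + hdiv X (fun y i => b t y i * ρ t y) x

theorem continuousOn_integral_sq_mul {φ : (Fin d → ℝ) → ℝ} (hφ : Continuous φ)
    (hφc : HasCompactSupport φ) {S : Set ℝ} {u : ℝ → (Fin d → ℝ) → ℝ}
    (hu : ContinuousOn (fun p : ℝ × (Fin d → ℝ) => u p.1 p.2) (S ×ˢ univ)) :
    ContinuousOn (fun t => ∫ x, φ x ^ 2 * u t x) S := by
  refine continuousOn_integral_of_compact_support hφc.isCompact
    (ContinuousOn.mul (f := fun p : ℝ × (Fin d → ℝ) => φ p.2 ^ 2) (by fun_prop) hu) ?_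
  intro t x _ hx
  simp [image_eq_zero_of_notMem_tsupport hx]

namespace IsFokkerPlanckSolution

theorem continuousOn_cutoffEnergy (h : IsFokkerPlanckSolution X σ T b ρ) {φ : (Fin d → ℝ) → ℝ}
    (hφ : Continuous φ) (hφc : HasCompactSupport φ) :
    ContinuousOn (fun t => cutoffEnergy φ (ρ t)) (Icc 0 T) :=
  continuousOn_integral_sq_mul hφ hφc (h.continuousOn.pow 2)

theorem continuousOn_cutoffDissipation (h : IsFokkerPlanckSolution X σ T b ρ)
    {φ : (Fin d → ℝ) → ℝ} (hφ : Continuous φ) (hφc : HasCompactSupport φ) :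
    ContinuousOn (fun t => cutoffDissipation X φ (ρ t)) (Ioo 0 T) :=
  continuousOn_integral_sq_mul hφ hφc
    (continuousOn_finsetSum _ fun i _ => (h.continuousOn_vderiv i).pow 2)

theorem hasDerivAt_cutoffEnergy (h : IsFokkerPlanckSolution X σ T b ρ) {φ : (Fin d → ℝ) → ℝ}
    (hφ : Continuous φ) (hφc : HasCompactSupport φ) {t : ℝ} (ht : t ∈ Ioo 0 T) :
    HasDerivAt (fun s => cutoffEnergy φ (ρ s))
      (2 * ∫ x, φ x ^ 2 * ρ t x * deriv (fun s => ρ s x) t) t := by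
  have hderiv (s : ℝ) (hs : s ∈ Ioo 0 T) (x : Fin d → ℝ) :
      HasDerivAt (fun s => ρ s x ^ 2) (2 * ρ s x * deriv (fun s => ρ s x) s) s := by
    simpa using (h.differentiableAt x s hs).hasDerivAt.fun_pow 2
  have hcont : ContinuousOn (fun p : ℝ × (Fin d → ℝ) =>
      2 * ρ p.1 p.2 * deriv (fun s => ρ s p.2) p.1) (Ioo 0 T ×ˢ univ) :=
    (continuousOn_const.mul (h.continuousOn.mono
      (prod_mono_left Ioo_subset_Icc_self))).mul h.continuousOn_deriv
  have hφ_sq : HasCompactSupport fun x => φ x ^ 2 := by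
    simpa using hasCompactSupport_sq_mul hφc fun _ => 1
  refine (hasDerivAt_integral_mul_of_hasCompactSupport (φ := fun x => φ x ^ 2)
    (hφ.pow 2) hφ_sq isOpen_Ioo
    (fun s hs => (h.contDiff s hs).continuous.pow 2) hcont hderiv ht).congr_deriv ?_
  rw [← integral_const_mul]
  congr 1 with x
  ring

theorem deriv_eq_hdiv_flux (h : IsFokkerPlanckSolution X σ T b ρ)
    (hX : ∀ i, ContDiff ℝ 1 (X i)) {t : ℝ} (ht : t ∈ Ioo 0 T) (x : Fin d → ℝ) :
    deriv (fun s => ρ s x) t = hdiv X (fokkerPlanckFlux X σ (b t) (ρ t)) x := by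
  rw [h.deriv_eq t ht x, hdiv_fokkerPlanckFlux hX (h.contDiff t ht) (h.contDiff_drift t ht)]

theorem cutoffEnergy_add_integral_le (h : IsFokkerPlanckSolution X σ T b ρ)
    (hX : ∀ i, ContDiff ℝ 1 (X i)) (hXdiv : ∀ i x, ediv (X i) x = 0) (hσ : 0 < σ) {M C : ℝ}
    (hbM : ∀ t ∈ Ioo 0 T, ∀ x, ∑ i, b t x i ^ 2 ≤ M ^ 2)
    (hρ_int : ∀ t ∈ Ioo 0 T, Integrable fun x => ρ t x ^ 2)
    (hρC : ∀ t ∈ Icc 0 T, ∫ x, ρ t x ^ 2 ≤ C) {φ : (Fin d → ℝ) → ℝ} (hφ : ContDiff ℝ 1 φ)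
    (hφc : HasCompactSupport φ) {c : ℝ} (hφ_grad : ∀ x, hgradSq X φ x ≤ c) {t : ℝ}
    (ht : t ∈ Icc 0 T) :
    IntegrableOn (fun s => σ * cutoffDissipation X φ (ρ s)) (Ioo 0 t) ∧
      cutoffEnergy φ (ρ t) + ∫ s in Ioo 0 t, σ * cutoffDissipation X φ (ρ s) ≤
        Real.exp (energyGrowthRate σ M * t) *
          (cutoffEnergy φ (ρ 0) + (8 * σ + 2) * c * C * t) := by
  have hc : 0 ≤ c := (hgradSq_nonneg X φ 0).trans (hφ_grad 0)
  have hC : 0 ≤ C := (integral_nonneg fun x => sq_nonneg (ρ t x)).trans (hρC t ht)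
  have hsub : Ioo 0 t ⊆ Ioo 0 T := Ioo_subset_Ioo_right ht.2
  have hrate (s : ℝ) (hs : s ∈ Ioo 0 t) :
      2 * (∫ x, φ x ^ 2 * ρ s x * deriv (fun s => ρ s x) s)
        + σ * cutoffDissipation X φ (ρ s) ≤
      energyGrowthRate σ M * cutoffEnergy φ (ρ s) + (8 * σ + 2) * c * C := by
    have hspace := two_mul_integral_mul_hdiv_flux_le hX hXdiv hσ (h.contDiff s (hsub hs))
      (hρ_int s (hsub hs)) (h.contDiff_drift s (hsub hs)) (hbM s (hsub hs)) hφ hφc hφ_grad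
    have hremainder : (8 * σ + 2) * c * ∫ x, ρ s x ^ 2 ≤ (8 * σ + 2) * c * C := by
      gcongr
      exact hρC s (Ioo_subset_Icc_self (hsub hs))
    simp only [h.deriv_eq_hdiv_flux hX (hsub hs)]
    linarith
  simpa using integrableOn_and_add_integral_le_of_deriv_add_le ht.1
    (energyGrowthRate_nonneg hσ M) (by positivity)
    ((h.continuousOn_cutoffEnergy hφ.continuous hφc).mono (Icc_subset_Icc_right ht.2))
    (fun s hs => h.hasDerivAt_cutoffEnergy hφ.continuous hφc (hsub hs))
    (((h.continuousOn_cutoffDissipation hφ.continuous hφc).mono hsub).const_mul σ)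
    (fun s _ => mul_nonneg hσ.le (cutoffDissipation_nonneg X φ (ρ s))) hrate

end IsFokkerPlanckSolution

end FokkerPlanck

section CutoffLimit

open Filter Topology

theorem lintegral_ofReal_le_liminf_ofReal_integral {α : Type*} [MeasurableSpace α]
    {μ : Measure α} {F : ℕ → α → ℝ} {f : α → ℝ} (hF : ∀ n, Integrable (F n) μ)
    (hF_nonneg : ∀ n x, 0 ≤ F n x) (hlim : ∀ x, Tendsto (fun n => F n x) atTop (𝓝 (f x))) :
    ∫⁻ x, ENNReal.ofReal (f x) ∂μ ≤
      liminf (fun n => ENNReal.ofReal (∫ x, F n x ∂μ)) atTop := by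
  have hliminf (x : α) :
      ENNReal.ofReal (f x) = liminf (fun n => ENNReal.ofReal (F n x)) atTop :=
    (ENNReal.tendsto_ofReal (hlim x)).liminf_eq.symm
  simp only [hliminf, ofReal_integral_eq_lintegral_ofReal (hF _) (.of_forall (hF_nonneg _))]
  exact lintegral_liminf_le' fun n => (hF n).aemeasurable.ennreal_ofReal

theorem integral_integral_le_of_lintegral_lintegral_le {α β : Type*} [MeasurableSpace α]
    [MeasurableSpace β] {μ : Measure α} {ν : Measure β} {f : α → β → ℝ}
    (hf : ∀ x y, 0 ≤ f x y) {C : ℝ} (hC : 0 ≤ C)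
    (h : ∫⁻ x, ∫⁻ y, ENNReal.ofReal (f x y) ∂ν ∂μ ≤ ENNReal.ofReal C) :
    ∫ x, ∫ y, f x y ∂ν ∂μ ≤ C := by
  have hinner (x : α) : ‖∫ y, f x y ∂ν‖ₑ ≤ ∫⁻ y, ENNReal.ofReal (f x y) ∂ν := by
    rw [← lintegral_enorm_of_nonneg (hf x)]
    exact enorm_integral_le_lintegral_enorm _
  refine (ENNReal.ofReal_le_ofReal_iff hC).1 ?_
  calc ENNReal.ofReal (∫ x, ∫ y, f x y ∂ν ∂μ)
      ≤ ‖∫ x, ∫ y, f x y ∂ν ∂μ‖ₑ := Real.ofReal_le_enorm _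
    _ ≤ ∫⁻ x, ‖∫ y, f x y ∂ν‖ₑ ∂μ := enorm_integral_le_lintegral_enorm _
    _ ≤ ∫⁻ x, ∫⁻ y, ENNReal.ofReal (f x y) ∂ν ∂μ := lintegral_mono hinner
    _ ≤ ENNReal.ofReal C := h

variable {d m : ℕ} {X : Fin m → (Fin d → ℝ) → (Fin d → ℝ)} {φ : ℕ → (Fin d → ℝ) → ℝ}
  {c : ℕ → ℝ} {u : (Fin d → ℝ) → ℝ}

namespace IsHorizontalCutoff

theorem cutoffEnergy_le (hφ : IsHorizontalCutoff X φ c) (hu : Integrable fun x => u x ^ 2)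
    (n : ℕ) : cutoffEnergy (φ n) u ≤ ∫ x, u x ^ 2 :=
  integral_mono_of_nonneg (.of_forall fun x => by positivity) hu <| .of_forall fun x =>
    mul_le_of_le_one_left (sq_nonneg _) (pow_le_one₀ (hφ.nonneg n x) (hφ.le_one n x))

theorem tendsto_cutoffEnergy (hφ : IsHorizontalCutoff X φ c)
    (hu : Integrable fun x => u x ^ 2) :
    Tendsto (fun n => cutoffEnergy (φ n) u) atTop (𝓝 (∫ x, u x ^ 2)) := by
  refine tendsto_integral_of_dominated_convergence (fun x => u x ^ 2)
    (fun n => ((hφ.contDiff n).continuous.pow 2).aestronglyMeasurable.mul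
      hu.aestronglyMeasurable) hu (fun n => .of_forall fun x => ?_) (.of_forall fun x => ?_)
  · rw [Real.norm_of_nonneg (by positivity)]
    exact mul_le_of_le_one_left (sq_nonneg _) (pow_le_one₀ (hφ.nonneg n x) (hφ.le_one n x))
  · simpa using ((hφ.tendsto_one x).pow 2).mul_const (u x ^ 2)

theorem lintegral_hgradSq_le_liminf (hφ : IsHorizontalCutoff X φ c)
    (hX : ∀ i, Continuous (X i)) (hu : ContDiff ℝ 1 u) :
    ∫⁻ x, ENNReal.ofReal (hgradSq X u x) ≤
      liminf (fun n => ENNReal.ofReal (cutoffDissipation X (φ n) u)) atTop := by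
  refine lintegral_ofReal_le_liminf_ofReal_integral
    (fun n => integrable_sq_mul (hφ.contDiff n).continuous (hφ.hasCompactSupport n)
      (continuous_hgradSq hX hu))
    (fun n x => mul_nonneg (sq_nonneg _) (hgradSq_nonneg X u x)) fun x => ?_
  simpa using ((hφ.tendsto_one x).pow 2).mul_const (hgradSq X u x)

end IsHorizontalCutoff

variable {σ T : ℝ} {b : ℝ → (Fin d → ℝ) → Fin m → ℝ} {ρ : ℝ → (Fin d → ℝ) → ℝ}

namespace IsFokkerPlanckSolution

theorem integral_sq_le (h : IsFokkerPlanckSolution X σ T b ρ) (hφ : IsHorizontalCutoff X φ c)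
    (hX : ∀ i, ContDiff ℝ 1 (X i)) (hXdiv : ∀ i x, ediv (X i) x = 0) (hσ : 0 < σ) {M C : ℝ}
    (hbM : ∀ t ∈ Ioo 0 T, ∀ x, ∑ i, b t x i ^ 2 ≤ M ^ 2)
    (hρ_int : ∀ t ∈ Icc 0 T, Integrable fun x => ρ t x ^ 2)
    (hρC : ∀ t ∈ Icc 0 T, ∫ x, ρ t x ^ 2 ≤ C) {t : ℝ} (ht : t ∈ Icc 0 T) :
    ∫ x, ρ t x ^ 2 ≤ Real.exp (energyGrowthRate σ M * t) * ∫ x, ρ 0 x ^ 2 := by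
  have hcutoff (n : ℕ) : cutoffEnergy (φ n) (ρ t) ≤ Real.exp (energyGrowthRate σ M * t) *
      (cutoffEnergy (φ n) (ρ 0) + (8 * σ + 2) * c n * C * t) :=
    (le_add_of_nonneg_right (integral_nonneg fun s =>
      mul_nonneg hσ.le (cutoffDissipation_nonneg X (φ n) (ρ s)))).trans
      (h.cutoffEnergy_add_integral_le hX hXdiv hσ hbM
        (fun s hs => hρ_int s (Ioo_subset_Icc_self hs)) hρC (hφ.contDiff n)
        (hφ.hasCompactSupport n) (hφ.hgradSq_le n) ht).2
  have hinitial := hφ.tendsto_cutoffEnergy (hρ_int 0 ⟨le_rfl, ht.1.trans ht.2⟩)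
  have hremainder : Tendsto (fun n => (8 * σ + 2) * c n * C * t) atTop (𝓝 0) := by
    simpa using ((hφ.tendsto_zero.const_mul (8 * σ + 2)).mul_const C).mul_const t
  simpa using le_of_tendsto_of_tendsto' (hφ.tendsto_cutoffEnergy (hρ_int t ht))
    ((hinitial.add hremainder).const_mul _) hcutoff

theorem integral_cutoffDissipation_le (h : IsFokkerPlanckSolution X σ T b ρ)
    (hφ : IsHorizontalCutoff X φ c) (hX : ∀ i, ContDiff ℝ 1 (X i))
    (hXdiv : ∀ i x, ediv (X i) x = 0) (hσ : 0 < σ) (hT : 0 ≤ T) {M C : ℝ}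
    (hbM : ∀ t ∈ Ioo 0 T, ∀ x, ∑ i, b t x i ^ 2 ≤ M ^ 2)
    (hρ_int : ∀ t ∈ Icc 0 T, Integrable fun x => ρ t x ^ 2)
    (hρC : ∀ t ∈ Icc 0 T, ∫ x, ρ t x ^ 2 ≤ C) (n : ℕ) :
    IntegrableOn (fun t => cutoffDissipation X (φ n) (ρ t)) (Ioo 0 T) ∧
      ∫ t in Ioo 0 T, cutoffDissipation X (φ n) (ρ t) ≤
        1 / σ * Real.exp (energyGrowthRate σ M * T) *
          ((∫ x, ρ 0 x ^ 2) + (8 * σ + 2) * c n * C * T) := by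
  obtain ⟨hint, hle⟩ := h.cutoffEnergy_add_integral_le hX hXdiv hσ hbM
    (fun s hs => hρ_int s (Ioo_subset_Icc_self hs)) hρC (hφ.contDiff n)
    (hφ.hasCompactSupport n) (hφ.hgradSq_le n) (right_mem_Icc.2 hT)
  refine ⟨(integrable_const_mul_iff hσ.ne'.isUnit _).1 hint, ?_⟩
  rw [integral_const_mul] at hle
  rw [mul_assoc, one_div, le_inv_mul_iff₀ hσ]
  calc σ * ∫ t in Ioo 0 T, cutoffDissipation X (φ n) (ρ t)
      ≤ cutoffEnergy (φ n) (ρ T) + σ * ∫ t in Ioo 0 T, cutoffDissipation X (φ n) (ρ t) :=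
        le_add_of_nonneg_left (cutoffEnergy_nonneg _ _)
    _ ≤ _ := hle
    _ ≤ _ := by
        gcongr
        exact hφ.cutoffEnergy_le (hρ_int 0 (left_mem_Icc.2 hT)) n

theorem lintegral_hgradSq_le (h : IsFokkerPlanckSolution X σ T b ρ)
    (hφ : IsHorizontalCutoff X φ c) (hX : ∀ i, ContDiff ℝ 1 (X i))
    (hXdiv : ∀ i x, ediv (X i) x = 0) (hσ : 0 < σ) (hT : 0 ≤ T) {M C : ℝ}
    (hbM : ∀ t ∈ Ioo 0 T, ∀ x, ∑ i, b t x i ^ 2 ≤ M ^ 2)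
    (hρ_int : ∀ t ∈ Icc 0 T, Integrable fun x => ρ t x ^ 2)
    (hρC : ∀ t ∈ Icc 0 T, ∫ x, ρ t x ^ 2 ≤ C) :
    ∫⁻ t in Ioc 0 T, ∫⁻ x, ENNReal.ofReal (hgradSq X (ρ t) x) ≤
      ENNReal.ofReal (1 / σ * Real.exp (energyGrowthRate σ M * T) * ∫ x, ρ 0 x ^ 2) := by
  have hcutoff := h.integral_cutoffDissipation_le hφ hX hXdiv hσ hT hbM hρ_int hρC
  have hremainder : Tendsto (fun n => (8 * σ + 2) * c n * C * T) atTop (𝓝 0) := by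
    simpa using ((hφ.tendsto_zero.const_mul (8 * σ + 2)).mul_const C).mul_const T
  have hbound := ENNReal.tendsto_ofReal <|
    (hremainder.const_add (∫ x, ρ 0 x ^ 2)).const_mul
      (1 / σ * Real.exp (energyGrowthRate σ M * T))
  rw [add_zero] at hbound
  rw [← restrict_Ioo_eq_restrict_Ioc, ← hbound.liminf_eq]
  calc ∫⁻ t in Ioo 0 T, ∫⁻ x, ENNReal.ofReal (hgradSq X (ρ t) x)
      ≤ ∫⁻ t in Ioo 0 T,
          liminf (fun n => ENNReal.ofReal (cutoffDissipation X (φ n) (ρ t))) atTop :=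
        setLIntegral_mono' measurableSet_Ioo fun t ht =>
          hφ.lintegral_hgradSq_le_liminf (fun i => (hX i).continuous)
            ((h.contDiff t ht).of_le one_le_two)
    _ ≤ liminf (fun n =>
          ∫⁻ t in Ioo 0 T, ENNReal.ofReal (cutoffDissipation X (φ n) (ρ t))) atTop :=
        lintegral_liminf_le' fun n => (hcutoff n).1.aemeasurable.ennreal_ofReal
    _ ≤ _ := liminf_le_liminf <| .of_forall fun n => by
        rw [← ofReal_integral_eq_lintegral_ofReal (hcutoff n).1
          (.of_forall fun t => cutoffDissipation_nonneg X (φ n) (ρ t))]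
        exact ENNReal.ofReal_le_ofReal (hcutoff n).2

end IsFokkerPlanckSolution

/-- The constant `K = (1 + 1/σ) exp ((2/σ + 2) M² T)` of the energy estimates. -/
def energyConstant (σ T M : ℝ) : ℝ := (1 + 1 / σ) * Real.exp (energyGrowthRate σ M * T)

theorem energyConstant_nonneg (hσ : 0 < σ) (T M : ℝ) : 0 ≤ energyConstant σ T M := by
  unfold energyConstant
  positivity

theorem fokkerPlanck_energy_estimates_general (hφ : IsHorizontalCutoff X φ c)
    (hX : ∀ i, ContDiff ℝ 1 (X i)) (hXdiv : ∀ i x, ediv (X i) x = 0) (hσ : 0 < σ) (hT : 0 ≤ T)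
    (h : IsFokkerPlanckSolution X σ T b ρ) {M C : ℝ}
    (hbM : ∀ t ∈ Ioo 0 T, ∀ x, ∑ i, b t x i ^ 2 ≤ M ^ 2)
    (hρ_int : ∀ t ∈ Icc 0 T, Integrable fun x => ρ t x ^ 2)
    (hρC : ∀ t ∈ Icc 0 T, ∫ x, ρ t x ^ 2 ≤ C) :
    (∀ t ∈ Icc 0 T, ∫ x, ρ t x ^ 2 ≤ energyConstant σ T M * ∫ x, ρ 0 x ^ 2) ∧
      ∫⁻ t in Ioc 0 T, ∫⁻ x, ENNReal.ofReal (hgradSq X (ρ t) x) ≤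
        ENNReal.ofReal (energyConstant σ T M * ∫ x, ρ 0 x ^ 2) := by
  have hinv : 0 ≤ 1 / σ := by positivity
  constructor
  · intro t ht
    have hexp : Real.exp (energyGrowthRate σ M * t) ≤ energyConstant σ T M :=
      calc Real.exp (energyGrowthRate σ M * t)
          ≤ Real.exp (energyGrowthRate σ M * T) :=
            Real.exp_le_exp.2 (mul_le_mul_of_nonneg_left ht.2 (energyGrowthRate_nonneg hσ M))
        _ ≤ energyConstant σ T M :=
            le_mul_of_one_le_left (Real.exp_nonneg _) (le_add_of_nonneg_right hinv)
    exact (h.integral_sq_le hφ hX hXdiv hσ hbM hρ_int hρC ht).trans (by gcongr)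
  · refine (h.lintegral_hgradSq_le hφ hX hXdiv hσ hT hbM hρ_int hρC).trans
      (ENNReal.ofReal_le_ofReal ?_)
    rw [energyConstant]
    gcongr
    exact le_add_of_nonneg_left zero_le_one

end CutoffLimit

/-- Energy estimates for the Fokker–Planck equation: there is a constant
`K`, depending only on `σ`, `T` and the sup norm bound `Mb` of the drift (and on the fixed
family of vector fields), such that every bounded classical solution `ρ` with
`ρ(0,·) = ρ₀ ∈ L²` and finite `sup_t ∫ ρ(t)²` satisfies
`∫ ρ(t)² ≤ K ∫ ρ₀²` for all `t ∈ [0,T]` and `∫₀^T ∫ |∇_G ρ|² ≤ K ∫ ρ₀²`. -/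
theorem fokkerPlanck_energy_estimates {d m : ℕ} (hd : 0 < d) (hm : 0 < m)
    (w : Fin d → ℕ) (hw : ∀ i, 0 < w i)
    (X : Fin m → (Fin d → ℝ) → (Fin d → ℝ)) (hXsm : ∀ i, ContDiff ℝ (⊤ : ℕ∞) (X i))
    (hXdivfree : ∀ i x, ediv (X i) x = 0)
    (hXhom : ∀ i, homogOne w (X i))
    (σ T Mb : ℝ) (hσ : 0 < σ) (hT : 0 < T) :
    ∃ K : ℝ, 0 ≤ K ∧
      ∀ (b : ℝ → (Fin d → ℝ) → Fin m → ℝ) (ρ : ℝ → (Fin d → ℝ) → ℝ)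
        (ρ₀ : (Fin d → ℝ) → ℝ) (Mρ Msup : ℝ),
        Continuous (fun p : ℝ × (Fin d → ℝ) => b p.1 p.2) →
        (∀ t ∈ Set.Icc (0:ℝ) T, ∀ x i, |b t x i| ≤ Mb) →
        (∀ t ∈ Set.Icc (0:ℝ) T, ∀ i, ContDiff ℝ 1 (fun y => b t y i)) →
        ContinuousOn (fun p : ℝ × (Fin d → ℝ) => ρ p.1 p.2) (Set.Icc 0 T ×ˢ Set.univ) →
        (∀ t ∈ Set.Icc (0:ℝ) T, ∀ x, |ρ t x| ≤ Mρ) →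
        (∀ (x : Fin d → ℝ), ∀ t ∈ Set.Ioo (0:ℝ) T, DifferentiableAt ℝ (fun s => ρ s x) t) →
        (∀ t ∈ Set.Ioo (0:ℝ) T, ContDiff ℝ 2 (ρ t)) →
        ContinuousOn (fun p : ℝ × (Fin d → ℝ) => deriv (fun s => ρ s p.2) p.1)
          (Set.Ioo 0 T ×ˢ Set.univ) →
        (∀ i, ContinuousOn (fun p : ℝ × (Fin d → ℝ) => vderiv (X i) (ρ p.1) p.2)
          (Set.Ioo 0 T ×ˢ Set.univ)) →
        (∀ i i', ContinuousOn
          (fun p : ℝ × (Fin d → ℝ) => vderiv (X i) (vderiv (X i') (ρ p.1)) p.2)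
          (Set.Ioo 0 T ×ˢ Set.univ)) →
        (∀ t ∈ Set.Ioo (0:ℝ) T, ∀ x,
          deriv (fun s => ρ s x) t
            = σ * hLap X (ρ t) x + hdiv X (fun y i => b t y i * ρ t y) x) →
        (∀ x, ρ 0 x = ρ₀ x) →
        MeasureTheory.Integrable (fun x : Fin d → ℝ => ρ₀ x ^ 2) →
        (∀ t ∈ Set.Icc (0:ℝ) T, MeasureTheory.Integrable (fun x : Fin d → ℝ => ρ t x ^ 2)) →
        (∀ t ∈ Set.Icc (0:ℝ) T, (∫ x : Fin d → ℝ, ρ t x ^ 2) ≤ Msup) →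
        (∀ t ∈ Set.Icc (0:ℝ) T,
            (∫ x : Fin d → ℝ, ρ t x ^ 2) ≤ K * ∫ x : Fin d → ℝ, ρ₀ x ^ 2) ∧
          (∫ t in Set.Ioc (0:ℝ) T, ∫ x : Fin d → ℝ, hgradSq X (ρ t) x)
            ≤ K * ∫ x : Fin d → ℝ, ρ₀ x ^ 2 := by
  have hX i : ContDiff ℝ 1 (X i) := (hXsm i).of_le (mod_cast le_top)
  obtain ⟨φ, c, hφ⟩ :=
    exists_isHorizontalCutoff_of_homogOne hw (fun i => (hX i).continuous) hXhom
  let K := energyConstant σ T (√(Fintype.card (Fin m)) * Mb)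
  have hK : 0 ≤ K := energyConstant_nonneg hσ T _
  refine ⟨K, hK, ?_⟩
  intro b ρ ρ₀ Mρ Msup _ hb hb_diff hρ_cont _ hρ_time hρ_space hρ_deriv hρ_grad _ heq hinit _
    hρ_int hρ_sup
  obtain rfl : ρ 0 = ρ₀ := funext hinit
  have hsol : IsFokkerPlanckSolution X σ T b ρ :=
    ⟨fun t ht => hb_diff t (Ioo_subset_Icc_self ht), hρ_cont, hρ_time, hρ_space, hρ_deriv,
      hρ_grad, heq⟩
  obtain ⟨henergy, hdissipation⟩ :=
    fokkerPlanck_energy_estimates_general hφ hX hXdivfree hσ hT.le hsol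
      (fun t ht x => sum_sq_le_of_abs_le (hb t (Ioo_subset_Icc_self ht) x)) hρ_int hρ_sup
  have hρ₀_nonneg : 0 ≤ ∫ x, ρ 0 x ^ 2 := integral_nonneg fun x => sq_nonneg _
  exact ⟨henergy, integral_integral_le_of_lintegral_lintegral_le
    (fun t x => hgradSq_nonneg X (ρ t) x) (mul_nonneg hK hρ₀_nonneg) hdissipation⟩
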